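/- arXiv:1112.1815 — 7 statements merged into one kernel-verified Lean document; each statement's English description precedes it below -/
import Mathlib

section
/- Let g : (0,∞) → ℝ be nonincreasing. Suppose that for every b > 0 the limit L(b) := lim_{n→∞, n ∈ ℕ} g(n·b)/√n exists and is finite. Then L(b) = L(1)·√b for every b > 0 (in particular, L has the form L(b) = −K√b for the constant K = −L(1) ≥ 0). -/
open MeasureTheory Set Filter

theorem aux_lim (g : ℝ → ℝ) (l b : ℝ)
    (h : Tendsto (fun n : ℕ => g n / Real.sqrt n) atTop (nhds l))
    (k : ℕ → ℕ) (hk : Tendsto k atTop atTop)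
    (hkb : Tendsto (fun n : ℕ => (k n : ℝ) / n) atTop (nhds b)) :
    Tendsto (fun n : ℕ => g (k n) / Real.sqrt n) atTop (nhds (l * Real.sqrt b)) := by
  have h1 := (h.comp hk).mul ((Real.continuous_sqrt.tendsto b).comp hkb)
  refine h1.congr' ?_
  filter_upwards [hk.eventually_gt_atTop 0] with n hn
  have : (0:ℝ) < k n := by exact_mod_cast hn
  have h2 : Real.sqrt (k n) ≠ 0 := (Real.sqrt_pos.2 this).ne'
  simp only [Function.comp]
  rw [Real.sqrt_div this.le]
  field_simp

/-- If `g` is nonincreasing on `(0, ∞)` and for every `b > 0` the limit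
`L b = lim_{n → ∞} g (n b) / √n` exists, then `L b = L 1 · √b` for all `b > 0`;
in particular `L` has the form `L b = -K √b` with `K = -L 1 ≥ 0`. -/
theorem busy_period_scaling_form
    (g L : ℝ → ℝ)
    (hg : ∀ x y : ℝ, 0 < x → x ≤ y → g y ≤ g x)
    (hL : ∀ b : ℝ, 0 < b →
      Tendsto (fun n : ℕ => g (n * b) / Real.sqrt n) atTop (nhds (L b))) :
    (∀ b : ℝ, 0 < b → L b = L 1 * Real.sqrt b) ∧ 0 ≤ -(L 1) := by
  have h1 : Tendsto (fun n : ℕ => g n / Real.sqrt n) atTop (nhds (L 1)) := by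
    simpa using hL 1 one_pos
  have hs : Tendsto (fun n : ℕ => Real.sqrt n) atTop atTop :=
    Real.tendsto_sqrt_atTop.comp tendsto_natCast_atTop_atTop
  constructor
  · intro b hb
    have hnb : Tendsto (fun n : ℕ => b * (n : ℝ)) atTop atTop :=
      tendsto_natCast_atTop_atTop.const_mul_atTop hb
    have hk : Tendsto (fun n : ℕ => ⌊b * (n : ℝ)⌋₊) atTop atTop :=
      tendsto_nat_floor_atTop.comp hnb
    have hq : Tendsto (fun n : ℕ => (⌊b * (n : ℝ)⌋₊ : ℝ) / n) atTop (nhds b) :=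
      (tendsto_nat_floor_mul_div_atTop hb.le).comp tendsto_natCast_atTop_atTop
    have hk' : Tendsto (fun n : ℕ => ⌊b * (n : ℝ)⌋₊ + 1) atTop atTop :=
      tendsto_atTop_mono (fun n => Nat.le_succ _) hk
    have hq' : Tendsto (fun n : ℕ => ((⌊b * (n : ℝ)⌋₊ + 1 : ℕ) : ℝ) / n) atTop (nhds b) := by
      have := hq.add (tendsto_one_div_atTop_nhds_zero_nat (𝕜 := ℝ))
      rw [add_zero] at this
      refine this.congr fun n => ?_
      push_cast
      ring
    have u := aux_lim g (L 1) b h1 _ hk hq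
    have l := aux_lim g (L 1) b h1 _ hk' hq'
    apply le_antisymm
    · refine le_of_tendsto_of_tendsto (hL b hb) u ?_
      filter_upwards [hk.eventually_gt_atTop 0] with n hn
      refine div_le_div_of_nonneg_right (hg _ _ (by exact_mod_cast hn) ?_) (Real.sqrt_nonneg _)
      rw [mul_comm (n : ℝ)]
      exact Nat.floor_le (by positivity)
    · refine le_of_tendsto_of_tendsto l (hL b hb) ?_
      filter_upwards [eventually_gt_atTop 0] with n hn
      have hn' : (0:ℝ) < n := by exact_mod_cast hn
      refine div_le_div_of_nonneg_right (hg _ _ (by positivity) ?_) (Real.sqrt_nonneg _)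
      rw [mul_comm (n : ℝ)]
      push_cast
      exact (Nat.lt_floor_add_one _).le
  · have h0 : Tendsto (fun n : ℕ => g 1 / Real.sqrt n) atTop (nhds 0) :=
      hs.const_div_atTop (g 1)
    have : L 1 ≤ 0 := by
      refine le_of_tendsto_of_tendsto h1 h0 ?_
      filter_upwards [eventually_ge_atTop 1] with n hn
      exact div_le_div_of_nonneg_right (hg _ _ one_pos (by exact_mod_cast hn)) (Real.sqrt_nonneg _)
    linarith
end

section
/- Assume the setup below. Then ∫₀^{λ*} Ξ(s) ds = 0, equivalently ∫₀¹ Ξ(λ*·s) ds = 0; moreover, λ* is the unique positive solution of this equation: if λ ∈ (0, λ*] satisfies ∫₀^{λ} Ξ(s) ds = 0 then λ = λ*. -/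
open MeasureTheory Set Filter

theorem aux_tangent (I : ℝ → ℝ) (hc : ConvexOn ℝ Set.univ I) (hd : Differentiable ℝ I) (x y : ℝ) :
    I x + deriv I x * (y - x) ≤ I y := by
  rcases lt_trichotomy x y with h | h | h
  · have := hc.le_slope_of_hasDerivAt (mem_univ x) (mem_univ y) h (hd x).hasDerivAt
    rw [slope_def_field, le_div_iff₀ (by linarith)] at this
    linarith
  · subst h; simp
  · have := hc.slope_le_of_hasDerivAt (mem_univ y) (mem_univ x) h (hd x).hasDerivAt
    rw [slope_def_field, div_le_iff₀ (by linarith)] at this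
    linarith

/-- `λ*` is the unique positive solution of `∫₀^λ Ξ(s) ds = 0`. -/
theorem lambda_star_integral_characterization
    (δ xstar lstar : ℝ) (I Ξ : ℝ → ℝ)
    (hδ : 0 < δ)
    (hconv : StrictConvexOn ℝ Set.univ I)
    (hC1 : ContDiff ℝ 1 I)
    (hImin : I (-δ) = 0)
    (hIpos : ∀ x : ℝ, x ≠ -δ → 0 < I x)
    (hderivδ : deriv I (-δ) = 0)
    (hxpos : 0 < xstar)
    (hxmin : ∀ x : ℝ, 0 < x → I xstar / xstar ≤ I x / x)
    (hlamdef : lstar = deriv I xstar)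
    (hlamalt : lstar = I xstar / xstar)
    (hlampos : 0 < lstar)
    (hΞinvL : ∀ x ∈ Set.Icc (-δ) xstar, Ξ (deriv I x) = x)
    (hΞinvR : ∀ r ∈ Set.Icc (0:ℝ) lstar, deriv I (Ξ r) = r)
    (hΞmaps : ∀ r ∈ Set.Icc (0:ℝ) lstar, Ξ r ∈ Set.Icc (-δ) xstar)
    (hΞcont : ContinuousOn Ξ (Set.Icc 0 lstar))
    (hΞmono : StrictMonoOn Ξ (Set.Icc 0 lstar))
    (hΞzero : Ξ 0 = -δ)
    (hΞlstar : Ξ lstar = xstar) :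
    (∫ s in (0:ℝ)..lstar, Ξ s) = 0 ∧
    (∫ s in (0:ℝ)..1, Ξ (lstar * s)) = 0 ∧
    (∀ lam : ℝ, 0 < lam → lam ≤ lstar → (∫ s in (0:ℝ)..lam, Ξ s) = 0 → lam = lstar) := by
  have hd : Differentiable ℝ I := hC1.differentiable (by norm_num)
  obtain ⟨G, hG⟩ : ∃ G : ℝ → ℝ, ∀ r, G r = r * Ξ r - I (Ξ r) := ⟨_, fun _ => rfl⟩
  have hlow : ∀ r ∈ Icc 0 lstar, ∀ s ∈ Icc 0 lstar, Ξ r * (s - r) ≤ G s - G r := by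
    intro r hr s hs
    have h := aux_tangent I hconv.convexOn hd (Ξ s) (Ξ r)
    rw [hΞinvR s hs] at h
    rw [hG, hG]
    nlinarith
  have hcont : ContinuousOn G (Icc 0 lstar) := by
    have : G = fun r => r * Ξ r - I (Ξ r) := funext hG
    rw [this]
    exact (continuousOn_id.mul hΞcont).sub (hd.continuous.comp_continuousOn hΞcont)
  have hder : ∀ r ∈ Ioo 0 lstar, HasDerivAt G (Ξ r) r := by
    intro r hr
    have hn : Icc 0 lstar ∈ nhds r := Icc_mem_nhds hr.1 hr.2
    have hca : ContinuousAt Ξ r := hΞcont.continuousAt hn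
    rw [hasDerivAt_iff_isLittleO, Asymptotics.isLittleO_iff]
    intro c hc
    filter_upwards [hn, Metric.continuousAt_iff'.1 hca c hc] with s hs hsc
    have h1 := hlow r (Ioo_subset_Icc_self hr) s hs
    have h2 := hlow s hs r (Ioo_subset_Icc_self hr)
    rw [Real.dist_eq] at hsc
    simp only [smul_eq_mul, Real.norm_eq_abs]
    calc |G s - G r - (s - r) * Ξ r| = G s - G r - (s - r) * Ξ r := abs_of_nonneg (by linarith)
      _ ≤ (Ξ s - Ξ r) * (s - r) := by linarith
      _ ≤ |(Ξ s - Ξ r) * (s - r)| := le_abs_self _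
      _ = |Ξ s - Ξ r| * |s - r| := abs_mul _ _
      _ ≤ c * |s - r| := by gcongr
  have hG0 : G 0 = 0 := by rw [hG, hΞzero, hImin]; ring
  have hGl : G lstar = 0 := by
    rw [hG, hΞlstar, hlamalt]; field_simp; ring
  have hint : ∀ lam, 0 < lam → lam ≤ lstar → (∫ s in (0:ℝ)..lam, Ξ s) = G lam := by
    intro lam h0 h1
    have hs : Icc 0 lam ⊆ Icc 0 lstar := Icc_subset_Icc_right h1
    rw [intervalIntegral.integral_eq_sub_of_hasDerivAt_of_le h0.le (hcont.mono hs)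
      (fun x hx => hder x ⟨hx.1, hx.2.trans_le h1⟩)
      ((hΞcont.mono hs).intervalIntegrable_of_Icc h0.le), hG0, sub_zero]
  have hmain : (∫ s in (0:ℝ)..lstar, Ξ s) = 0 := by rw [hint _ hlampos le_rfl, hGl]
  refine ⟨hmain, ?_, ?_⟩
  · rw [intervalIntegral.integral_comp_mul_left (fun s => Ξ s) hlampos.ne']
    simp [hmain]
  · intro lam h0 h1 h
    rw [hint lam h0 h1] at h
    by_contra hne
    have hlt : lam < lstar := lt_of_le_of_ne h1 hne
    have m0 : (0:ℝ) ∈ Icc 0 lstar := ⟨le_rfl, hlampos.le⟩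
    have ml : lam ∈ Icc 0 lstar := ⟨h0.le, h1⟩
    have mm : (lam + lstar) / 2 ∈ Icc 0 lstar := ⟨by linarith, by linarith⟩
    have ms : lstar ∈ Icc 0 lstar := ⟨hlampos.le, le_rfl⟩
    have e1 := hlow lam ml 0 m0
    have hp : 0 ≤ Ξ lam := by
      by_contra hneg
      push Not at hneg
      nlinarith
    have hm := hΞmono ml mm (by linarith)
    have e2 := hlow lam ml _ mm
    have e3 := hlow _ mm _ ms
    have p2 : 0 ≤ Ξ lam * ((lam + lstar) / 2 - lam) := mul_nonneg hp (by linarith)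
    have p3 : 0 < Ξ ((lam + lstar) / 2) * (lstar - (lam + lstar) / 2) :=
      mul_pos (by linarith) (by linarith)
    linarith
end

section
/- Assume the setup below, and additionally assume the symmetry Λ(θ) = Λ(λ* − θ) for all θ ∈ [0, λ*]. Then: (i) ψ*(t) = ψ*(1−t) for all t ∈ [0, 1]; (ii) x* = δ; (iii) λ* = I'(δ) = I(δ)/δ; and (iv) λ* = 2·I'(0). -/
open MeasureTheory Set Filter

/-- Under the symmetry `Λ(θ) = Λ(λ* − θ)` on `[0, λ*]`: the path `ψ*` is symmetric,
`x* = δ`, `λ* = I'(δ) = I(δ)/δ`, and `λ* = 2 I'(0)`. -/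
theorem symmetric_scgf_consequences
    (δ xstar lstar : ℝ) (I Ξ : ℝ → ℝ)
    (hδ : 0 < δ)
    (hconv : StrictConvexOn ℝ Set.univ I)
    (hC1 : ContDiff ℝ 1 I)
    (hImin : I (-δ) = 0)
    (hIpos : ∀ x : ℝ, x ≠ -δ → 0 < I x)
    (hderivδ : deriv I (-δ) = 0)
    (hxpos : 0 < xstar)
    (hxmin : ∀ x : ℝ, 0 < x → I xstar / xstar ≤ I x / x)
    (hlamdef : lstar = deriv I xstar)
    (hlamalt : lstar = I xstar / xstar)
    (hlampos : 0 < lstar)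
    (hΞinvL : ∀ x ∈ Set.Icc (-δ) xstar, Ξ (deriv I x) = x)
    (hΞinvR : ∀ r ∈ Set.Icc (0:ℝ) lstar, deriv I (Ξ r) = r)
    (hΞmaps : ∀ r ∈ Set.Icc (0:ℝ) lstar, Ξ r ∈ Set.Icc (-δ) xstar)
    (hΞcont : ContinuousOn Ξ (Set.Icc 0 lstar))
    (hΞmono : StrictMonoOn Ξ (Set.Icc 0 lstar))
    (hΞzero : Ξ 0 = -δ)
    (hΞlstar : Ξ lstar = xstar)
    (ψ : ℝ → ℝ)
    (hψ : ∀ t : ℝ, ψ t = ∫ s in (0:ℝ)..t, Ξ (lstar * (1 - s)))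
    (Λ : ℝ → ℝ)
    (hΛ : ∀ θ ∈ Set.Icc (0:ℝ) lstar, Λ θ = θ * Ξ θ - I (Ξ θ))
    (hsym : ∀ θ ∈ Set.Icc (0:ℝ) lstar, Λ θ = Λ (lstar - θ)) :
    (∀ t ∈ Set.Icc (0:ℝ) 1, ψ t = ψ (1 - t)) ∧
    xstar = δ ∧
    lstar = deriv I δ ∧
    lstar = I δ / δ ∧
    lstar = 2 * deriv I 0 := by
  have hdiff : Differentiable ℝ I := hC1.differentiable (by norm_num)
  have tang : ∀ x y : ℝ, I x + deriv I x * (y - x) ≤ I y := by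
    intro x y
    rcases lt_trichotomy x y with h | h | h
    · have h1 := hconv.convexOn.deriv_le_slope (mem_univ x) (mem_univ y) h (hdiff x)
      rw [slope_def_field, le_div_iff₀ (by linarith)] at h1
      linarith
    · subst h; simp
    · have h1 := hconv.convexOn.slope_le_deriv (mem_univ y) (mem_univ x) h (hdiff x)
      rw [slope_def_field, div_le_iff₀ (by linarith)] at h1
      linarith
  have sub : ∀ θ ∈ Set.Icc (0:ℝ) lstar, ∀ η ∈ Set.Icc (0:ℝ) lstar,
      Λ θ + (η - θ) * Ξ θ ≤ Λ η := by
    intro θ hθ η hη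
    have h := tang (Ξ η) (Ξ θ)
    rw [hΞinvR η hη] at h
    rw [hΛ θ hθ, hΛ η hη]
    linarith
  have refl : ∀ θ ∈ Set.Icc (0:ℝ) lstar, lstar - θ ∈ Set.Icc (0:ℝ) lstar := by
    intro θ hθ
    exact ⟨by linarith [hθ.2], by linarith [hθ.1]⟩
  have key1 : ∀ θ ∈ Set.Icc (0:ℝ) lstar, ∀ η ∈ Set.Icc (0:ℝ) lstar, θ < η →
      Ξ θ + Ξ (lstar - η) ≤ 0 ∧ 0 ≤ Ξ (lstar - θ) + Ξ η := by
    intro θ hθ η hη h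
    have a1 := sub θ hθ η hη
    have a2 := sub η hη θ hθ
    have b1 := sub _ (refl θ hθ) _ (refl η hη)
    have b2 := sub _ (refl η hη) _ (refl θ hθ)
    rw [← hsym θ hθ, ← hsym η hη] at b1 b2
    constructor <;> nlinarith
  have contR : ContinuousOn (fun η => Ξ (lstar - η)) (Set.Icc 0 lstar) :=
    hΞcont.comp (by fun_prop) (fun x hx => refl x hx)
  have key2 : ∀ θ ∈ Set.Icc (0:ℝ) lstar, θ < lstar → Ξ θ + Ξ (lstar - θ) = 0 := by
    intro θ hθ hlt
    have hsub : Set.Ioc θ lstar ⊆ Set.Icc 0 lstar :=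
      fun x hx => ⟨by linarith [hx.1, hθ.1], hx.2⟩
    have hcl : θ ∈ closure (Set.Ioc θ lstar) := by
      rw [closure_Ioc hlt.ne]; exact ⟨le_rfl, hlt.le⟩
    have c1 : ContinuousWithinAt (fun η => Ξ θ + Ξ (lstar - η)) (Set.Ioc θ lstar) θ :=
      continuousWithinAt_const.add ((contR θ hθ).mono hsub)
    have c2 : ContinuousWithinAt (fun η => Ξ (lstar - θ) + Ξ η) (Set.Ioc θ lstar) θ :=
      continuousWithinAt_const.add ((hΞcont θ hθ).mono hsub)
    have l1 := c1.closure_le hcl (continuousWithinAt_const (b := (0:ℝ)))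
      (fun y hy => (key1 θ hθ y (hsub hy) hy.1).1)
    have l2 := (continuousWithinAt_const (b := (0:ℝ))).closure_le hcl c2
      (fun y hy => (key1 θ hθ y (hsub hy) hy.1).2)
    linarith
  have key : ∀ θ ∈ Set.Icc (0:ℝ) lstar, Ξ (lstar - θ) = - Ξ θ := by
    intro θ hθ
    rcases hθ.2.lt_or_eq with h | h
    · linarith [key2 θ hθ h]
    · have := key2 0 ⟨le_rfl, hlampos.le⟩ hlampos
      rw [sub_zero] at this
      rw [h, sub_self]; linarith
  have hx : xstar = δ := by
    have := key 0 ⟨le_rfl, hlampos.le⟩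
    rw [sub_zero, hΞlstar, hΞzero] at this
    linarith
  refine ⟨?_, hx, hx ▸ hlamdef, hx ▸ hlamalt, ?_⟩
  · intro t ht
    have hcf : ContinuousOn (fun s => Ξ (lstar * (1 - s))) (Set.Icc 0 1) := by
      refine hΞcont.comp (by fun_prop) (fun s hs => ⟨?_, ?_⟩)
      · nlinarith [hs.2]
      · nlinarith [hs.1]
    have hint : ∀ a ∈ Set.Icc (0:ℝ) 1, ∀ b ∈ Set.Icc (0:ℝ) 1,
        IntervalIntegrable (fun s => Ξ (lstar * (1 - s))) volume a b := fun a ha b hb =>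
      (hcf.mono (Set.uIcc_subset_Icc ha hb)).intervalIntegrable
    have h0 : (0:ℝ) ∈ Set.Icc (0:ℝ) 1 := ⟨le_rfl, zero_le_one⟩
    have ht' : 1 - t ∈ Set.Icc (0:ℝ) 1 := ⟨by linarith [ht.2], by linarith [ht.1]⟩
    have hd := intervalIntegral.integral_interval_sub_left (hint 0 h0 t ht) (hint 0 h0 _ ht')
    have hr := intervalIntegral.integral_comp_sub_left
      (a := 1 - t) (b := t) (fun s => Ξ (lstar * (1 - s))) 1
    rw [sub_sub_cancel] at hr
    have hn : (∫ s in (1 - t)..t, Ξ (lstar * (1 - (1 - s)))) =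
        ∫ s in (1 - t)..t, - Ξ (lstar * (1 - s)) := by
      apply intervalIntegral.integral_congr
      intro s hs
      have hs' := Set.uIcc_subset_Icc ht' ht hs
      have := key (lstar * (1 - s)) ⟨by nlinarith [hs'.2], by nlinarith [hs'.1]⟩
      simp only
      rw [← this]
      congr 1; ring
    rw [hn, intervalIntegral.integral_neg] at hr
    rw [hψ, hψ]
    linarith
  · have hm : lstar / 2 ∈ Set.Icc (0:ℝ) lstar := ⟨by linarith, by linarith⟩
    have h1 := key _ hm
    rw [sub_half] at h1
    have h2 : Ξ (lstar / 2) = 0 := by linarith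
    have h3 := hΞinvR _ hm
    rw [h2] at h3
    linarith
end

section
/- Assume the setup below. Then ∫₀¹ ψ*(t) dt = −(1/λ*) ∫₀¹ Λ(λ*(1−t)) dt = −(1/(λ*)²) ∫₀^{λ*} Λ(θ) dθ, and this quantity is strictly positive. -/
open MeasureTheory Set Filter

/-- The area swept by `ψ*`:
`∫₀¹ ψ*(t) dt = −(1/λ*) ∫₀¹ Λ(λ*(1−t)) dt = −(1/λ*²) ∫₀^{λ*} Λ(θ) dθ > 0`. -/
theorem psi_star_area
    (δ xstar lstar : ℝ) (I Ξ : ℝ → ℝ)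
    (hδ : 0 < δ)
    (hconv : StrictConvexOn ℝ Set.univ I)
    (hC1 : ContDiff ℝ 1 I)
    (hImin : I (-δ) = 0)
    (hIpos : ∀ x : ℝ, x ≠ -δ → 0 < I x)
    (hderivδ : deriv I (-δ) = 0)
    (hxpos : 0 < xstar)
    (hxmin : ∀ x : ℝ, 0 < x → I xstar / xstar ≤ I x / x)
    (hlamdef : lstar = deriv I xstar)
    (hlamalt : lstar = I xstar / xstar)
    (hlampos : 0 < lstar)
    (hΞinvL : ∀ x ∈ Set.Icc (-δ) xstar, Ξ (deriv I x) = x)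
    (hΞinvR : ∀ r ∈ Set.Icc (0:ℝ) lstar, deriv I (Ξ r) = r)
    (hΞmaps : ∀ r ∈ Set.Icc (0:ℝ) lstar, Ξ r ∈ Set.Icc (-δ) xstar)
    (hΞcont : ContinuousOn Ξ (Set.Icc 0 lstar))
    (hΞmono : StrictMonoOn Ξ (Set.Icc 0 lstar))
    (hΞzero : Ξ 0 = -δ)
    (hΞlstar : Ξ lstar = xstar)
    (ψ : ℝ → ℝ)
    (hψ : ∀ t : ℝ, ψ t = ∫ s in (0:ℝ)..t, Ξ (lstar * (1 - s)))
    (Λ : ℝ → ℝ)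
    (hΛ : ∀ θ ∈ Set.Icc (0:ℝ) lstar, Λ θ = θ * Ξ θ - I (Ξ θ)) :
    (∫ t in (0:ℝ)..1, ψ t) = -(1 / lstar) * ∫ t in (0:ℝ)..1, Λ (lstar * (1 - t)) ∧
    (∫ t in (0:ℝ)..1, ψ t) = -(1 / lstar ^ 2) * ∫ θ in (0:ℝ)..lstar, Λ θ ∧
    0 < ∫ t in (0:ℝ)..1, ψ t := by
  have hdiff : ∀ x, DifferentiableAt ℝ I x := fun x => (hC1.differentiable one_ne_zero) x
  have htan : ∀ x y : ℝ, I x + deriv I x * (y - x) ≤ I y := by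
    intro x y
    rcases lt_trichotomy x y with h | h | h
    · have := hconv.convexOn.le_slope_of_hasDerivAt (mem_univ x) (mem_univ y) h (hdiff x).hasDerivAt
      rw [slope_def_field, le_div_iff₀ (by linarith)] at this
      linarith
    · subst h; simp
    · have := hconv.convexOn.slope_le_of_hasDerivAt (mem_univ y) (mem_univ x) h (hdiff x).hasDerivAt
      rw [slope_def_field, div_le_iff₀ (by linarith)] at this
      linarith
  have hgap : ∀ a ∈ Set.Icc (0:ℝ) lstar, ∀ b ∈ Set.Icc (0:ℝ) lstar,
      Λ a + (b - a) * Ξ a ≤ Λ b := by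
    intro a ha b hb
    have h := htan (Ξ b) (Ξ a)
    rw [hΞinvR b hb] at h
    rw [hΛ a ha, hΛ b hb]
    nlinarith
  have hcont : ContinuousOn Λ (Set.Icc 0 lstar) := by
    refine ContinuousOn.congr (f := fun θ => θ * Ξ θ - I (Ξ θ)) ?_ hΛ
    exact (continuousOn_id.mul hΞcont).sub (hC1.continuous.comp_continuousOn hΞcont)
  have hder : ∀ a ∈ Set.Ioo (0:ℝ) lstar, HasDerivAt Λ (Ξ a) a := by
    intro a ha
    have hca : ContinuousAt Ξ a := hΞcont.continuousAt (Icc_mem_nhds ha.1 ha.2)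
    rw [hasDerivAt_iff_isLittleO, Asymptotics.isLittleO_iff]
    intro c hc
    filter_upwards [Icc_mem_nhds ha.1 ha.2, Metric.continuousAt_iff'.1 hca c hc] with b hb hbc
    have h1 := hgap a (Ioo_subset_Icc_self ha) b hb
    have h2 := hgap b hb a (Ioo_subset_Icc_self ha)
    rw [Real.dist_eq] at hbc
    rw [Real.norm_eq_abs, Real.norm_eq_abs, smul_eq_mul, abs_of_nonneg (by linarith)]
    calc Λ b - Λ a - (b - a) * Ξ a ≤ (Ξ b - Ξ a) * (b - a) := by linarith
      _ ≤ |(Ξ b - Ξ a) * (b - a)| := le_abs_self _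
      _ = |Ξ b - Ξ a| * |b - a| := abs_mul _ _
      _ ≤ c * |b - a| := by gcongr
  have hl : Λ lstar = 0 := by
    rw [hΛ lstar ⟨hlampos.le, le_rfl⟩, hΞlstar]
    nth_rewrite 1 [hlamalt]
    field_simp
    simp
  have hneg : ∀ a ∈ Set.Ioo (0:ℝ) lstar, Λ a < 0 := by
    intro a ha
    rw [hΛ a (Ioo_subset_Icc_self ha)]
    have hlt : -δ < Ξ a := by
      rw [← hΞzero]
      exact hΞmono ⟨le_rfl, hlampos.le⟩ (Ioo_subset_Icc_self ha) ha.1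
    have hp := hIpos _ hlt.ne'
    rcases le_or_gt (Ξ a) 0 with h | h
    · nlinarith [ha.1]
    · have := hxmin _ h
      rw [← hlamalt, le_div_iff₀ h] at this
      nlinarith [ha.2]
  have hψ' : ∀ t ∈ Set.Icc (0:ℝ) 1, ψ t = -(1 / lstar) * Λ (lstar * (1 - t)) := by
    intro t ht
    have h0 : 0 ≤ lstar * (1 - t) := mul_nonneg hlampos.le (by linarith [ht.2])
    have h1 : lstar * (1 - t) ≤ lstar := by nlinarith [ht.1]
    have hs : Set.Icc (lstar * (1 - t)) lstar ⊆ Set.Icc 0 lstar := Icc_subset_Icc_left h0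
    have hF : ∫ θ in (lstar * (1 - t))..lstar, Ξ θ = Λ lstar - Λ (lstar * (1 - t)) := by
      refine intervalIntegral.integral_eq_sub_of_hasDerivAt_of_le h1 (hcont.mono hs)
        (fun x hx => hder x ⟨h0.trans_lt hx.1, hx.2⟩) ?_
      apply ContinuousOn.intervalIntegrable
      rw [uIcc_of_le h1]
      exact hΞcont.mono hs
    have h2 : ∫ s in (0:ℝ)..t, Ξ (lstar * (1 - s)) = ∫ s in (0:ℝ)..t, Ξ (lstar - lstar * s) := by
      simp only [mul_sub, mul_one]
    rw [hψ, h2, intervalIntegral.integral_comp_sub_mul _ hlampos.ne', mul_zero, sub_zero,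
      show lstar - lstar * t = lstar * (1 - t) by ring, hF, hl, smul_eq_mul]
    ring
  have e1 : (∫ t in (0:ℝ)..1, ψ t) = -(1 / lstar) * ∫ t in (0:ℝ)..1, Λ (lstar * (1 - t)) := by
    rw [← intervalIntegral.integral_const_mul]
    apply intervalIntegral.integral_congr
    rw [uIcc_of_le zero_le_one]
    exact hψ'
  have e2 : (∫ t in (0:ℝ)..1, Λ (lstar * (1 - t))) = lstar⁻¹ * ∫ θ in (0:ℝ)..lstar, Λ θ := by
    have h2 : ∫ s in (0:ℝ)..1, Λ (lstar * (1 - s)) = ∫ s in (0:ℝ)..1, Λ (lstar - lstar * s) := by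
      simp only [mul_sub, mul_one]
    rw [h2, intervalIntegral.integral_comp_sub_mul _ hlampos.ne', mul_zero, sub_zero, mul_one,
      sub_self, smul_eq_mul]
  have e3 : (∫ t in (0:ℝ)..1, ψ t) = -(1 / lstar ^ 2) * ∫ θ in (0:ℝ)..lstar, Λ θ := by
    rw [e1, e2]
    field_simp
  refine ⟨e1, e3, ?_⟩
  have hpos : 0 < ∫ θ in (0:ℝ)..lstar, -Λ θ := by
    refine intervalIntegral.intervalIntegral_pos_of_pos_on ?_
      (fun x hx => neg_pos.2 (hneg x hx)) hlampos
    apply ContinuousOn.intervalIntegrable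
    rw [uIcc_of_le hlampos.le]
    exact hcont.neg
  rw [intervalIntegral.integral_neg] at hpos
  rw [e3, neg_mul, ← mul_neg]
  positivity
end

section
/- Assume the setup below and define K = 2·√(−∫₀^{λ*} Λ(θ) dθ). Then K > 0 and K = (∫₀¹ I(Ξ(λ*(1−t))) dt) / √(∫₀¹ ψ*(t) dt); that is, the cost of ψ* divided by the square root of the area swept by ψ* equals K. -/
open MeasureTheory Set Filter

/-- With `K = 2 √(−∫₀^{λ*} Λ)`, we have `K > 0` and `K` equals the cost of `ψ*`
divided by the square root of the area it sweeps. -/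
theorem K_formula
    (δ xstar lstar : ℝ) (I Ξ : ℝ → ℝ)
    (hδ : 0 < δ)
    (hconv : StrictConvexOn ℝ Set.univ I)
    (hC1 : ContDiff ℝ 1 I)
    (hImin : I (-δ) = 0)
    (hIpos : ∀ x : ℝ, x ≠ -δ → 0 < I x)
    (hderivδ : deriv I (-δ) = 0)
    (hxpos : 0 < xstar)
    (hxmin : ∀ x : ℝ, 0 < x → I xstar / xstar ≤ I x / x)
    (hlamdef : lstar = deriv I xstar)
    (hlamalt : lstar = I xstar / xstar)
    (hlampos : 0 < lstar)
    (hΞinvL : ∀ x ∈ Set.Icc (-δ) xstar, Ξ (deriv I x) = x)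
    (hΞinvR : ∀ r ∈ Set.Icc (0:ℝ) lstar, deriv I (Ξ r) = r)
    (hΞmaps : ∀ r ∈ Set.Icc (0:ℝ) lstar, Ξ r ∈ Set.Icc (-δ) xstar)
    (hΞcont : ContinuousOn Ξ (Set.Icc 0 lstar))
    (hΞmono : StrictMonoOn Ξ (Set.Icc 0 lstar))
    (hΞzero : Ξ 0 = -δ)
    (hΞlstar : Ξ lstar = xstar)
    (ψ : ℝ → ℝ)
    (hψ : ∀ t : ℝ, ψ t = ∫ s in (0:ℝ)..t, Ξ (lstar * (1 - s)))
    (Λ : ℝ → ℝ)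
    (hΛ : ∀ θ ∈ Set.Icc (0:ℝ) lstar, Λ θ = θ * Ξ θ - I (Ξ θ))
    (K : ℝ)
    (hK : K = 2 * Real.sqrt (-∫ θ in (0:ℝ)..lstar, Λ θ)) :
    0 < K ∧
    K = (∫ t in (0:ℝ)..1, I (Ξ (lstar * (1 - t)))) /
        Real.sqrt (∫ t in (0:ℝ)..1, ψ t) := by
  have hdiff : Differentiable ℝ I := hC1.differentiable (by norm_num)
  have tang : ∀ x y : ℝ, I x + deriv I x * (y - x) ≤ I y := by
    intro x y
    rcases lt_trichotomy x y with h | h | h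
    · have := hconv.convexOn.deriv_le_slope (mem_univ x) (mem_univ y) h (hdiff x)
      rw [slope_def_field, le_div_iff₀ (by linarith)] at this
      linarith
    · subst h; simp
    · have := hconv.convexOn.slope_le_deriv (mem_univ y) (mem_univ x) h (hdiff x)
      rw [slope_def_field, div_le_iff₀ (by linarith)] at this
      linarith
  have hlow : ∀ a ∈ Icc (0:ℝ) lstar, ∀ b ∈ Icc (0:ℝ) lstar,
      (b - a) * Ξ a ≤ Λ b - Λ a := by
    intro a ha b hb
    rw [hΛ a ha, hΛ b hb]
    have := tang (Ξ b) (Ξ a)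
    rw [hΞinvR b hb] at this
    linarith
  have hIc : ContinuousOn (fun θ => I (Ξ θ)) (Icc 0 lstar) :=
    hC1.continuous.comp_continuousOn hΞcont
  have hΛc : ContinuousOn Λ (Icc 0 lstar) :=
    ((continuousOn_id.mul hΞcont).sub hIc).congr hΛ
  have hder : ∀ a ∈ Ioo (0:ℝ) lstar, HasDerivAt Λ (Ξ a) a := by
    intro a ha
    have hnh : Icc (0:ℝ) lstar ∈ nhds a := Icc_mem_nhds ha.1 ha.2
    have hca : ContinuousAt Ξ a := hΞcont.continuousAt hnh
    rw [hasDerivAt_iff_isLittleO, Asymptotics.isLittleO_iff]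
    intro c hc
    have h1 := Metric.continuousAt_iff'.1 hca c hc
    filter_upwards [h1, hnh] with b hb hbI
    have haI := Ioo_subset_Icc_self ha
    have e1 := hlow a haI b hbI
    have e2 := hlow b hbI a haI
    rw [Real.dist_eq] at hb
    simp only [smul_eq_mul, Real.norm_eq_abs]
    rw [abs_of_nonneg (by linarith)]
    calc Λ b - Λ a - (b - a) * Ξ a ≤ (Ξ b - Ξ a) * (b - a) := by linarith
      _ ≤ |(Ξ b - Ξ a) * (b - a)| := le_abs_self _
      _ = |Ξ b - Ξ a| * |b - a| := abs_mul _ _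
      _ ≤ c * |b - a| := by gcongr
  have h0I : (0:ℝ) ∈ Icc (0:ℝ) lstar := ⟨le_rfl, hlampos.le⟩
  have hlI : lstar ∈ Icc (0:ℝ) lstar := ⟨hlampos.le, le_rfl⟩
  have hΛl : Λ lstar = 0 := by
    rw [hΛ _ hlI, hΞlstar, hlamalt]; field_simp; ring
  have hneg : ∀ θ ∈ Ioo (0:ℝ) lstar, 0 < -Λ θ := by
    intro θ hθ
    have hθI := Ioo_subset_Icc_self hθ
    rw [hΛ θ hθI]
    have hgt := hΞmono h0I hθI hθ.1
    rw [hΞzero] at hgt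
    have hp := hIpos _ hgt.ne'
    rcases le_or_gt (Ξ θ) 0 with h | h
    · nlinarith [mul_nonneg hθ.1.le (neg_nonneg.2 h)]
    · have := hxmin _ h
      rw [← hlamalt, le_div_iff₀ h] at this
      nlinarith [mul_pos (sub_pos.2 hθ.2) h]
  have hii : ∀ f : ℝ → ℝ, ContinuousOn f (Icc 0 lstar) →
      IntervalIntegrable f volume 0 lstar := fun f hf =>
    hf.intervalIntegrable_of_Icc hlampos.le
  obtain ⟨A, hA⟩ : ∃ A, A = -∫ θ in (0:ℝ)..lstar, Λ θ := ⟨_, rfl⟩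
  have hApos : 0 < A := by
    rw [hA, ← intervalIntegral.integral_neg]
    exact intervalIntegral.intervalIntegral_pos_of_pos_on (hii _ hΛc.neg) hneg hlampos
  have hparts : ∫ θ in (0:ℝ)..lstar, (Λ θ + θ * Ξ θ) = 0 := by
    have := intervalIntegral.integral_eq_sub_of_hasDerivAt_of_le (f := fun θ => θ * Λ θ)
      (f' := fun θ => Λ θ + θ * Ξ θ) hlampos.le (continuousOn_id.mul hΛc)
      (fun x hx => by
        have h2 := HasDerivAt.fun_mul (hasDerivAt_id' x) (hder x hx)
        rw [one_mul] at h2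
        exact h2)
      (hii _ (hΛc.add (continuousOn_id.mul hΞcont)))
    rw [this]; simp [hΛl]
  have hcost : ∫ θ in (0:ℝ)..lstar, I (Ξ θ) = 2 * A := by
    have e : ∫ θ in (0:ℝ)..lstar, I (Ξ θ) =
        ∫ θ in (0:ℝ)..lstar, ((Λ θ + θ * Ξ θ) - 2 * Λ θ) := by
      apply intervalIntegral.integral_congr
      intro θ hθ
      rw [uIcc_of_le hlampos.le] at hθ
      simp only [hΛ θ hθ]; ring
    rw [e, intervalIntegral.integral_sub (hii (fun θ => Λ θ + θ * Ξ θ) (hΛc.add (continuousOn_id.mul hΞcont)))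
      ((hii _ hΛc).const_mul 2), hparts, intervalIntegral.integral_const_mul, hA]
    ring
  have hsub : ∀ (f : ℝ → ℝ) (t : ℝ), ∫ s in (0:ℝ)..t, f (lstar * (1 - s)) =
      lstar⁻¹ * ∫ θ in (lstar - lstar * t)..lstar, f θ := by
    intro f t
    have := intervalIntegral.integral_comp_sub_mul (a := 0) (b := t) f hlampos.ne' lstar
    simp only [mul_zero, sub_zero, smul_eq_mul] at this
    rw [← this]
    simp only [mul_sub, mul_one]
  have hψ' : ∀ t ∈ Icc (0:ℝ) 1, ψ t = lstar⁻¹ * (-Λ (lstar * (1 - t))) := by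
    intro t ht
    have g0 : 0 ≤ lstar - lstar * t := by nlinarith [ht.2]
    have g1 : lstar - lstar * t ≤ lstar := by nlinarith [ht.1]
    rw [hψ, hsub]
    have hss : Icc (lstar - lstar * t) lstar ⊆ Icc 0 lstar := Icc_subset_Icc_left g0
    rw [intervalIntegral.integral_eq_sub_of_hasDerivAt_of_le g1 (hΛc.mono hss)
      (fun x hx => hder x ⟨lt_of_le_of_lt g0 hx.1, hx.2⟩)
      ((hΞcont.mono hss).intervalIntegrable_of_Icc g1), hΛl]
    rw [show lstar * (1 - t) = lstar - lstar * t by ring]; ring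
  have harea : ∫ t in (0:ℝ)..1, ψ t = A / lstar ^ 2 := by
    have e : ∫ t in (0:ℝ)..1, ψ t =
        ∫ t in (0:ℝ)..1, (fun θ => lstar⁻¹ * (-Λ θ)) (lstar * (1 - t)) := by
      apply intervalIntegral.integral_congr
      intro t ht
      rw [uIcc_of_le zero_le_one] at ht
      exact hψ' t ht
    rw [e, hsub (fun θ => lstar⁻¹ * (-Λ θ)) 1, mul_one, sub_self, intervalIntegral.integral_const_mul,
      intervalIntegral.integral_neg, ← hA]
    field_simp
  have hc2 := hsub (fun θ => I (Ξ θ)) 1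
  simp only [mul_one, sub_self] at hc2
  rw [hcost] at hc2
  rw [← hA] at hK
  have hsq : 0 < Real.sqrt A := Real.sqrt_pos.2 hApos
  refine ⟨by rw [hK]; positivity, ?_⟩
  rw [hc2, harea, Real.sqrt_div hApos.le, Real.sqrt_sq hlampos.le, hK]
  field_simp
  rw [Real.sq_sqrt hApos.le]
end

section
/- Assume the setup below, with I : ℝ → ℝ convex everywhere. Let φ : [0, 1] → ℝ be continuously differentiable with φ(0) = 0 and ∫₀¹ φ(t) dt ≥ ∫₀¹ ψ*(t) dt. Then ∫₀¹ I(φ'(t)) dt ≥ ∫₀¹ I(ψ*'(t)) dt. That is, ψ* minimizes the rate-functional cost among all paths starting at 0 that sweep at least the same area. -/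
open MeasureTheory Set Filter

lemma parts_aux (f f' : ℝ → ℝ) (hc : ContinuousOn f (Icc (0:ℝ) 1))
    (hd : ∀ t ∈ Ioo (0:ℝ) 1, HasDerivAt f (f' t) t)
    (hc' : ContinuousOn f' (Icc (0:ℝ) 1)) (h0 : f 0 = 0) :
    (∫ t in (0:ℝ)..1, (1 - t) * f' t) = ∫ t in (0:ℝ)..1, f t := by
  have hu : uIcc (0:ℝ) 1 = Icc 0 1 := uIcc_of_le zero_le_one
  have h1 : IntervalIntegrable (fun t => (1 - t) * f' t) volume 0 1 := by
    apply ContinuousOn.intervalIntegrable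
    rw [hu]; fun_prop
  have h2 : IntervalIntegrable f volume 0 1 := by
    apply ContinuousOn.intervalIntegrable
    rwa [hu]
  have key := intervalIntegral.integral_eq_sub_of_hasDerivAt_of_le (zero_le_one (α := ℝ))
    (f := fun t => (1 - t) * f t) (f' := fun t => (1 - t) * f' t - f t)
    (by fun_prop)
    (by
      intro t ht
      have := ((hasDerivAt_id t).const_sub 1).mul (hd t ht)
      have e : (1 - t) * f' t - f t = -1 * f t + (1 - id t) * f' t := by
        simp only [id]; ring
      rw [e]
      exact this) (h1.sub h2)
  rw [intervalIntegral.integral_sub h1 h2] at key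
  simp [h0] at key
  linarith

lemma tangent_aux (I : ℝ → ℝ) (hI : ConvexOn ℝ univ I) (hd : Differentiable ℝ I) (x y : ℝ) :
    I x + deriv I x * (y - x) ≤ I y := by
  rcases lt_trichotomy x y with h | h | h
  · have := hI.deriv_le_slope (mem_univ x) (mem_univ y) h (hd x)
    rw [slope_def_field, le_div_iff₀ (by linarith)] at this
    linarith
  · subst h; simp
  · have := hI.slope_le_deriv (mem_univ y) (mem_univ x) h (hd x)
    rw [slope_def_field, div_le_iff₀ (by linarith)] at this
    linarith

/-- Optimality of `ψ*`: among continuously differentiable paths `φ` on `[0,1]` with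
`φ(0) = 0` sweeping at least the area of `ψ*`, the path `ψ*` minimizes the cost
`∫₀¹ I(φ'(t)) dt`. -/
theorem psi_star_optimal
    (δ xstar lstar : ℝ) (I Ξ : ℝ → ℝ)
    (hδ : 0 < δ)
    (hconv : StrictConvexOn ℝ Set.univ I)
    (hC1 : ContDiff ℝ 1 I)
    (hImin : I (-δ) = 0)
    (hIpos : ∀ x : ℝ, x ≠ -δ → 0 < I x)
    (hderivδ : deriv I (-δ) = 0)
    (hxpos : 0 < xstar)
    (hxmin : ∀ x : ℝ, 0 < x → I xstar / xstar ≤ I x / x)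
    (hlamdef : lstar = deriv I xstar)
    (hlamalt : lstar = I xstar / xstar)
    (hlampos : 0 < lstar)
    (hΞinvL : ∀ x ∈ Set.Icc (-δ) xstar, Ξ (deriv I x) = x)
    (hΞinvR : ∀ r ∈ Set.Icc (0:ℝ) lstar, deriv I (Ξ r) = r)
    (hΞmaps : ∀ r ∈ Set.Icc (0:ℝ) lstar, Ξ r ∈ Set.Icc (-δ) xstar)
    (hΞcont : ContinuousOn Ξ (Set.Icc 0 lstar))
    (hΞmono : StrictMonoOn Ξ (Set.Icc 0 lstar))
    (hΞzero : Ξ 0 = -δ)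
    (hΞlstar : Ξ lstar = xstar)
    (ψ : ℝ → ℝ)
    (hψ : ∀ t : ℝ, ψ t = ∫ s in (0:ℝ)..t, Ξ (lstar * (1 - s)))
    (hIconv : ConvexOn ℝ Set.univ I)
    (φ φ' : ℝ → ℝ)
    (hφderiv : ∀ t ∈ Set.Icc (0:ℝ) 1, HasDerivAt φ (φ' t) t)
    (hφ'cont : ContinuousOn φ' (Set.Icc (0:ℝ) 1))
    (hφ0 : φ 0 = 0)
    (harea : (∫ t in (0:ℝ)..1, ψ t) ≤ ∫ t in (0:ℝ)..1, φ t) :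
    (∫ t in (0:ℝ)..1, I (Ξ (lstar * (1 - t)))) ≤ ∫ t in (0:ℝ)..1, I (φ' t) := by
  have hu : uIcc (0:ℝ) 1 = Icc 0 1 := uIcc_of_le zero_le_one
  have hIc : Continuous I := hC1.continuous
  have hId : Differentiable ℝ I := hC1.differentiable (by norm_num)
  have hm : ∀ t ∈ Icc (0:ℝ) 1, lstar * (1 - t) ∈ Icc (0:ℝ) lstar := by
    intro t ht
    constructor
    · exact mul_nonneg hlampos.le (by linarith [ht.2])
    · nlinarith [ht.1]
  obtain ⟨g, hg⟩ : ∃ g : ℝ → ℝ, g = fun t => Ξ (lstar * (1 - t)) := ⟨_, rfl⟩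
  have hgc : ContinuousOn g (Icc (0:ℝ) 1) := by
    rw [hg]
    exact hΞcont.comp (by fun_prop) hm
  have hgi : IntervalIntegrable g volume 0 1 :=
    ContinuousOn.intervalIntegrable (by rwa [hu])
  have hψg : ψ = fun t => ∫ s in (0:ℝ)..t, g s := by
    funext t; rw [hψ, hg]
  have hψc : ContinuousOn ψ (Icc (0:ℝ) 1) := by
    rw [hψg, ← hu]
    exact intervalIntegral.continuousOn_primitive_interval' hgi (by simp)
  have hψd : ∀ t ∈ Ioo (0:ℝ) 1, HasDerivAt ψ (g t) t := by
    intro t ht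
    rw [hψg]
    apply intervalIntegral.integral_hasDerivAt_right
    · apply ContinuousOn.intervalIntegrable
      rw [uIcc_of_le ht.1.le]
      exact hgc.mono (Icc_subset_Icc le_rfl ht.2.le)
    · exact (hgc.mono Ioo_subset_Icc_self).stronglyMeasurableAtFilter isOpen_Ioo t ht
    · exact hgc.continuousAt (Icc_mem_nhds ht.1 ht.2)
  have e1 := parts_aux ψ g hψc hψd hgc (by rw [hψ]; simp)
  have e2 := parts_aux φ φ' (fun t ht => (hφderiv t ht).continuousAt.continuousWithinAt)
    (fun t ht => hφderiv t (Ioo_subset_Icc_self ht)) hφ'cont hφ0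
  have i1 : IntervalIntegrable (fun t => (1 - t) * g t) volume 0 1 :=
    ContinuousOn.intervalIntegrable (by rw [hu]; fun_prop)
  have i2 : IntervalIntegrable (fun t => (1 - t) * φ' t) volume 0 1 :=
    ContinuousOn.intervalIntegrable (by rw [hu]; fun_prop)
  have i3 : IntervalIntegrable (fun t => I (g t)) volume 0 1 :=
    ContinuousOn.intervalIntegrable (by rw [hu]; exact hIc.comp_continuousOn hgc)
  have i4 : IntervalIntegrable (fun t => I (φ' t)) volume 0 1 :=
    ContinuousOn.intervalIntegrable (by rw [hu]; exact hIc.comp_continuousOn hφ'cont)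
  have i5 := (i2.sub i1).const_mul lstar
  have key := intervalIntegral.integral_mono_on (zero_le_one (α := ℝ)) (i3.add i5) i4 (by
    intro t ht
    have h := tangent_aux I hIconv hId (g t) (φ' t)
    have hr : deriv I (g t) = lstar * (1 - t) := by
      rw [hg]; exact hΞinvR _ (hm t ht)
    rw [hr] at h
    beta_reduce
    linarith)
  have e3 := intervalIntegral.integral_add i3 i5
  have e4 := intervalIntegral.integral_sub i2 i1
  have e5 : (∫ t in (0:ℝ)..1, lstar * ((1 - t) * φ' t - (1 - t) * g t))
      = lstar * ∫ t in (0:ℝ)..1, ((1 - t) * φ' t - (1 - t) * g t) :=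
    intervalIntegral.integral_const_mul _ _
  have e6 : (∫ t in (0:ℝ)..1, I (Ξ (lstar * (1 - t)))) = ∫ t in (0:ℝ)..1, I (g t) := by
    rw [hg]
  rw [e6]
  rw [e3, e5, e4, e1, e2] at key
  nlinarith [mul_nonneg hlampos.le (sub_nonneg.2 harea)]
end

section
/- Let 0 < α < β < 1 and define Λ(θ) = log(((1−α)e^{−θ} + (1−β)e^{θ} + √(4αβ + ((1−α)e^{−θ} − (1−β)e^{θ})²))/2) for θ ∈ ℝ. Set λ* = log((1−α)/(1−β)). Then λ* > 0, Λ(λ*) = 0, sup{θ ∈ ℝ : Λ(θ) ≤ 0} = λ*, and the symmetry Λ(θ) = Λ(λ* − θ) holds for all θ ∈ ℝ. -/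
open MeasureTheory Set Filter

/-- Markov `{−1, +1}` increments: with `λ* = log((1−α)/(1−β))` one has `λ* > 0`,
`Λ(λ*) = 0`, `sup {θ : Λ(θ) ≤ 0} = λ*`, and the symmetry `Λ(θ) = Λ(λ* − θ)`. -/
theorem markov_symmetry
    (α β : ℝ) (hα : 0 < α) (hαβ : α < β) (hβ1 : β < 1)
    (Λ : ℝ → ℝ)
    (hΛ : ∀ θ : ℝ, Λ θ = Real.log ((((1 - α) * Real.exp (-θ) + (1 - β) * Real.exp θ) +
      Real.sqrt (4 * α * β +
        ((1 - α) * Real.exp (-θ) - (1 - β) * Real.exp θ) ^ 2)) / 2))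
    (lstar : ℝ) (hlam : lstar = Real.log ((1 - α) / (1 - β))) :
    0 < lstar ∧
    Λ lstar = 0 ∧
    sSup {θ : ℝ | Λ θ ≤ 0} = lstar ∧
    (∀ θ : ℝ, Λ θ = Λ (lstar - θ)) := by
  have ha : 0 < 1 - α := by linarith
  have hb : 0 < 1 - β := by linarith
  have hel : Real.exp lstar = (1 - α) / (1 - β) := by
    rw [hlam, Real.exp_log (div_pos ha hb)]
  have hel' : Real.exp (-lstar) = (1 - β) / (1 - α) := by
    rw [Real.exp_neg, hel, inv_div]
  have hpos : 0 < lstar := by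
    rw [hlam]
    apply Real.log_pos
    rw [one_lt_div hb]
    linarith
  have hzero : Λ lstar = 0 := by
    rw [hΛ, hel, hel', mul_div_cancel₀ _ ha.ne', mul_div_cancel₀ _ hb.ne']
    have h1 : 4 * α * β + ((1 - β) - (1 - α)) ^ 2 = (α + β) ^ 2 := by ring
    rw [h1, Real.sqrt_sq (by linarith)]
    have h2 : ((1 - β) + (1 - α) + (α + β)) / 2 = 1 := by ring
    rw [h2, Real.log_one]
  refine ⟨hpos, hzero, ?_, ?_⟩
  · have hg : IsGreatest {θ : ℝ | Λ θ ≤ 0} lstar := by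
      refine ⟨hzero.le, ?_⟩
      intro θ hθ
      by_contra hlt
      push Not at hlt
      have hθ' : Λ θ ≤ 0 := hθ
      apply absurd hθ'
      push Not
      rw [hΛ]
      apply Real.log_pos
      have ht : (1 - α) / (1 - β) < Real.exp θ := by
        rw [← hel]; exact Real.exp_lt_exp.mpr hlt
      have ht1 : 1 < Real.exp θ := Real.one_lt_exp_iff.mpr (hpos.trans hlt)
      have hu : 0 < Real.exp (-θ) := Real.exp_pos _
      have htu : Real.exp θ * Real.exp (-θ) = 1 := by
        rw [← Real.exp_add, add_neg_cancel, Real.exp_zero]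
      rw [div_lt_iff₀ hb] at ht
      generalize Real.exp θ = t at *
      generalize Real.exp (-θ) = u at *
      have key : 0 < (1 - α) * u + (1 - β) * t - ((1 - α) + (1 - β)) := by
        have h1 : 0 < (t - 1) * (t * (1 - β) - (1 - α)) * u :=
          mul_pos (mul_pos (by linarith) (by linarith)) hu
        have h2 : (t - 1) * (t * (1 - β) - (1 - α)) * u
            = (1 - α) * u + (1 - β) * t - ((1 - α) + (1 - β)) := by
          linear_combination ((1 - β) * t - (1 - β) - (1 - α)) * htu
        linarith
      have hs : 2 - ((1 - α) * u + (1 - β) * t) <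
          Real.sqrt (4 * α * β + ((1 - α) * u - (1 - β) * t) ^ 2) := by
        apply Real.lt_sqrt_of_sq_lt
        have h3 : 4 * α * β + ((1 - α) * u - (1 - β) * t) ^ 2
            - (2 - ((1 - α) * u + (1 - β) * t)) ^ 2
            = 4 * ((1 - α) * u + (1 - β) * t - ((1 - α) + (1 - β))) := by
          linear_combination (-4 * (1 - α) * (1 - β)) * htu
        linarith
      linarith
    exact hg.csSup_eq
  · intro θ
    have e1 : (1 - α) * Real.exp (-(lstar - θ)) = (1 - β) * Real.exp θ := by
      rw [show -(lstar - θ) = -lstar + θ by ring, Real.exp_add, hel']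
      field_simp
    have e2 : (1 - β) * Real.exp (lstar - θ) = (1 - α) * Real.exp (-θ) := by
      rw [sub_eq_add_neg lstar, Real.exp_add, hel]
      field_simp
    rw [hΛ, hΛ, e1, e2]
    congr 3
    · ring
    · congr 1
      ring
end
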